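/- Let $1 < p < \infty$, $\mathcal{S}$ a sparse family of dyadic cubes, $w \in A_p$ with $\sigma = w^{1-p'}$, and $R$ a cube. Then $(\int_R (\sum_{Q \in \mathcal{S}, Q\subseteq R}(\fint_Q w)\chi_Q)^{p'}\sigma\,dx)^{1/p'} \lesssim (1+\log[w]_{A_p})^{1/p}\,[w]_{(A_p)^{1/p}(A_\infty^{\exp})^{1/p'}}\, w(R)^{1/p'}$. -/

import Mathlib

open MeasureTheory Set
open scoped ENNReal

noncomputable section

/-- A (closed, axis-parallel, nondegenerate) cube in `ℝⁿ`. -/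
def IsCube {n : ℕ} (Q : Set (Fin n → ℝ)) : Prop :=
  ∃ (a : Fin n → ℝ) (l : ℝ), 0 < l ∧ Q = Set.Icc a (a + fun _ => l)

/-- The average `⨍_Q f` of `f` over `Q` (w.r.t. Lebesgue measure). -/
def avg {n : ℕ} (Q : Set (Fin n → ℝ)) (f : (Fin n → ℝ) → ℝ) : ℝ :=
  (volume Q).toReal⁻¹ * ∫ x in Q, f x

/-- The `A_p` quantity `A_p(w,Q) = (⨍_Q w) (⨍_Q w^{-1/(p-1)})^{p-1}`. -/
def ApQ {n : ℕ} (p : ℝ) (w : (Fin n → ℝ) → ℝ) (Q : Set (Fin n → ℝ)) : ℝ :=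
  avg Q w * (avg Q fun x => w x ^ (-(1 / (p - 1)))) ^ (p - 1)

/-- The exponential `A_∞` quantity `A_∞^exp(w,Q) = (⨍_Q w) exp(-⨍_Q log w)`. -/
def AexpQ {n : ℕ} (w : (Fin n → ℝ) → ℝ) (Q : Set (Fin n → ℝ)) : ℝ :=
  avg Q w * Real.exp (-(avg Q fun x => Real.log (w x)))

/-- A dyadic cube of generation `k` (half-open, side length `2^k`). -/
def IsDyadicCubeOf {n : ℕ} (k : ℤ) (Q : Set (Fin n → ℝ)) : Prop :=
  ∃ a : Fin n → ℝ, Q = Set.univ.pi fun i => Set.Ico (a i) (a i + (2 : ℝ) ^ k)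

/-- A dyadic grid: a collection of cubes of side lengths `2^k`, pairwise nested or
disjoint, partitioning `ℝⁿ` at each scale. -/
def IsDyadicGrid {n : ℕ} (𝒟 : Set (Set (Fin n → ℝ))) : Prop :=
  (∀ Q ∈ 𝒟, ∃ k : ℤ, IsDyadicCubeOf k Q) ∧
  (∀ Q ∈ 𝒟, ∀ P ∈ 𝒟, Q ⊆ P ∨ P ⊆ Q ∨ Disjoint Q P) ∧
  (∀ k : ℤ, ⋃₀ {Q | Q ∈ 𝒟 ∧ IsDyadicCubeOf k Q} = Set.univ ∧
    Set.PairwiseDisjoint {Q | Q ∈ 𝒟 ∧ IsDyadicCubeOf k Q} id)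

/-- The union of the strict subcubes of `Q` belonging to the family `𝒮`. -/
def strictUnion {n : ℕ} (𝒮 : Set (Set (Fin n → ℝ))) (Q : Set (Fin n → ℝ)) :
    Set (Fin n → ℝ) :=
  ⋃ Q' ∈ {Q' | Q' ∈ 𝒮 ∧ Q' ⊂ Q}, Q'

/-- The "major subset" `E_Q = Q \ ⋃ {Q' ∈ 𝒮 : Q' ⊊ Q}`. -/
def Eset {n : ℕ} (𝒮 : Set (Set (Fin n → ℝ))) (Q : Set (Fin n → ℝ)) :
    Set (Fin n → ℝ) :=
  Q \ strictUnion 𝒮 Q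

/-- A sparse family: for each `Q ∈ 𝒮`, `|⋃ {Q' ∈ 𝒮 : Q' ⊊ Q}| ≤ |Q|/2`. -/
def IsSparse {n : ℕ} (𝒮 : Set (Set (Fin n → ℝ))) : Prop :=
  ∀ Q ∈ 𝒮, volume (strictUnion 𝒮 Q) ≤ volume Q / 2

/-- The sparse operator `T^𝒮 f = ∑_{Q ∈ 𝒮} (⨍_Q f) χ_Q` (with values in `ℝ≥0∞`). -/
def sparseT {n : ℕ} (𝒮 : Set (Set (Fin n → ℝ))) (f : (Fin n → ℝ) → ℝ)
    (x : Fin n → ℝ) : ℝ≥0∞ :=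
  ∑' Q : 𝒮, Set.indicator Q.1 (fun _ => ENNReal.ofReal (avg Q.1 f)) x


section Laminar

open scoped Classical

variable {X : Type*}

/-- A finite laminar family is covered by the disjoint subfamily of its maximal members. -/
theorem exists_disjoint_cover {𝒢 : Finset (Set X)}
    (hlam : ∀ Q ∈ 𝒢, ∀ P ∈ 𝒢, Q ⊆ P ∨ P ⊆ Q ∨ Disjoint Q P) :
    ∃ 𝒞 ⊆ 𝒢, (𝒞 : Set (Set X)).PairwiseDisjoint id ∧ ∀ Q ∈ 𝒢, ∃ P ∈ 𝒞, Q ⊆ P := by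
  refine ⟨𝒢.filter fun P => Maximal (· ∈ 𝒢) P, Finset.filter_subset _ _, ?_, ?_⟩
  · intro P hP P' hP' hne
    simp only [Finset.coe_filter, Set.mem_ofPred_eq] at hP hP'
    rcases hlam P hP.1 P' hP'.1 with h | h | h
    · exact absurd (hP.2.eq_of_subset hP'.1 h) hne
    · exact absurd (hP'.2.eq_of_subset hP.1 h).symm hne
    · exact h
  · intro Q hQ
    obtain ⟨P, hQP, hP⟩ := Finset.exists_le_maximal 𝒢 hQ
    exact ⟨P, Finset.mem_filter.2 ⟨hP.prop, hP⟩, hQP⟩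

theorem sum_eq_sum_cover {M : Type*} [AddCommMonoid M] {𝒢 𝒞 : Finset (Set X)}
    (hne : ∀ Q ∈ 𝒢, Q.Nonempty)
    (hd : (𝒞 : Set (Set X)).PairwiseDisjoint id) (hcov : ∀ Q ∈ 𝒢, ∃ P ∈ 𝒞, Q ⊆ P)
    (g : Set X → M) :
    ∑ Q ∈ 𝒢, g Q = ∑ P ∈ 𝒞, ∑ Q ∈ 𝒢 with Q ⊆ P, g Q := by
  have h : 𝒢 = 𝒞.biUnion fun P => 𝒢.filter (· ⊆ P) := by
    ext Q
    simp only [Finset.mem_biUnion, Finset.mem_filter]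
    refine ⟨fun hQ => ?_, fun ⟨P, _, hQ, _⟩ => hQ⟩
    obtain ⟨P, hP, hQP⟩ := hcov Q hQ
    exact ⟨P, hP, hQ, hQP⟩
  conv_lhs => rw [h]
  refine Finset.sum_biUnion fun P hP P' hP' hPP' => Finset.disjoint_left.2 fun Q hQ hQ' => ?_
  rw [Finset.mem_filter] at hQ hQ'
  obtain ⟨x, hx⟩ := hne Q hQ.1
  exact Set.disjoint_left.1 (hd hP hP' hPP') (hQ.2 hx) (hQ'.2 hx)

/-- Induction on a finite laminar family, from the children of a member to the member. -/
theorem laminar_induction {𝒢 : Finset (Set X)} (hne : ∀ Q ∈ 𝒢, Q.Nonempty)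
    (hlam : ∀ Q ∈ 𝒢, ∀ P ∈ 𝒢, Q ⊆ P ∨ P ⊆ Q ∨ Disjoint Q P) {motive : Set X → Prop}
    (step : ∀ Q ∈ 𝒢, ∀ 𝒞 ⊆ 𝒢, (𝒞 : Set (Set X)).PairwiseDisjoint id → (∀ P ∈ 𝒞, P ⊂ Q) →
      (∀ g : Set X → ℝ, ∑ Q' ∈ 𝒢 with Q' ⊆ Q, g Q' =
        g Q + ∑ P ∈ 𝒞, ∑ Q' ∈ 𝒢 with Q' ⊆ P, g Q') →
      (∀ P ∈ 𝒞, motive P) → motive Q) :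
    ∀ Q ∈ 𝒢, motive Q := by
  intro Q hQ
  induction hN : (𝒢.filter (· ⊂ Q)).card using Nat.strong_induction_on generalizing Q with
  | _ N ih =>
  subst hN
  obtain ⟨𝒞, h𝒞, hd, hcov⟩ := exists_disjoint_cover (𝒢 := 𝒢.filter (· ⊂ Q))
    fun P hP P' hP' => hlam P (Finset.mem_filter.1 hP).1 P' (Finset.mem_filter.1 hP').1
  have hsub : ∀ P ∈ 𝒞, P ⊂ Q := fun P hP => (Finset.mem_filter.1 (h𝒞 hP)).2
  have h𝒞𝒢 : 𝒞 ⊆ 𝒢 := h𝒞.trans (Finset.filter_subset _ _)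
  refine step Q hQ 𝒞 h𝒞𝒢 hd hsub (fun g => ?_) fun P hP => ?_
  · have h1 : 𝒢.filter (· ⊆ Q) = insert Q (𝒢.filter (· ⊂ Q)) := by
      ext Q'
      simp only [Finset.mem_filter, Finset.mem_insert]
      constructor
      · rintro ⟨h, h'⟩
        rcases h'.eq_or_ssubset with h'' | h''
        · exact Or.inl h''
        · exact Or.inr ⟨h, h''⟩
      · rintro (rfl | ⟨h, h'⟩)
        · exact ⟨hQ, subset_rfl⟩
        · exact ⟨h, h'.subset⟩
    rw [h1, Finset.sum_insert (by simp),
      sum_eq_sum_cover (fun Q' hQ' => hne Q' (Finset.mem_filter.1 hQ').1) hd hcov]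
    congr 1
    refine Finset.sum_congr rfl fun P hP => Finset.sum_congr ?_ fun _ _ => rfl
    ext Q'
    simp only [Finset.mem_filter]
    exact ⟨fun h => ⟨h.1.1, h.2⟩, fun h => ⟨⟨h.1, h.2.trans_ssubset (hsub P hP)⟩, h.2⟩⟩
  · refine ih _ (Finset.card_lt_card ?_) P (h𝒞𝒢 hP) rfl
    refine (Finset.ssubset_iff_of_subset fun Q' hQ' => ?_).2 ⟨P, h𝒞 hP, by simp⟩
    rw [Finset.mem_filter] at hQ' ⊢
    exact ⟨hQ'.1, hQ'.2.trans (hsub P hP)⟩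

/-- Kolmogorov's inequality for a sparse laminar family. -/
theorem sum_average_rpow_le {𝒢 : Finset (Set X)} (hne : ∀ Q ∈ 𝒢, Q.Nonempty)
    (hlam : ∀ Q ∈ 𝒢, ∀ P ∈ 𝒢, Q ⊆ P ∨ P ⊆ Q ∨ Disjoint Q P) {m f : Set X → ℝ}
    (hm : ∀ Q ∈ 𝒢, 0 < m Q) (hf : ∀ Q ∈ 𝒢, 0 < f Q)
    (hsum : ∀ Q ∈ 𝒢, ∀ 𝒞 ⊆ 𝒢, (𝒞 : Set (Set X)).PairwiseDisjoint id → (∀ P ∈ 𝒞, P ⊂ Q) →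
      ∑ P ∈ 𝒞, m P ≤ m Q / 2 ∧ ∑ P ∈ 𝒞, f P ≤ f Q)
    {θ : ℝ} (h0 : 0 ≤ θ) (h1 : θ < 1) :
    ∀ Q ∈ 𝒢, ∑ Q' ∈ 𝒢 with Q' ⊆ Q, (f Q' / m Q') ^ θ * m Q' ≤
      (1 - 2 ^ (θ - 1))⁻¹ * ((f Q / m Q) ^ θ * m Q) := by
  have h2 : (2 : ℝ) ^ (θ - 1) < 1 := Real.rpow_lt_one_of_one_lt_of_neg one_lt_two (by linarith)
  have h2' : 0 < 1 - (2 : ℝ) ^ (θ - 1) := by linarith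
  refine laminar_induction hne hlam fun Q hQ 𝒞 h𝒞 hd hsub hdec ih => ?_
  rw [hdec]
  obtain ⟨hm2, hf1⟩ := hsum Q hQ 𝒞 h𝒞 hd hsub
  have hmQ := hm Q hQ
  have hfQ := hf Q hQ
  set v := 2 * (f Q / m Q) with hv
  have hvpos : 0 < v := by positivity
  have key : (∑ P ∈ 𝒞, (f P / m P) ^ θ * m P) * v ^ (1 - θ) ≤ f Q := by
    calc (∑ P ∈ 𝒞, (f P / m P) ^ θ * m P) * v ^ (1 - θ)
        = ∑ P ∈ 𝒞, ((f P / m P) ^ θ * v ^ (1 - θ)) * m P := by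
          rw [Finset.sum_mul]; exact Finset.sum_congr rfl fun _ _ => by ring
      _ ≤ ∑ P ∈ 𝒞, (θ * f P + (1 - θ) * v * m P) := by
          refine Finset.sum_le_sum fun P hP => ?_
          have hmP := hm P (h𝒞 hP)
          have hfP := hf P (h𝒞 hP)
          have := Real.geom_mean_le_arith_mean2_weighted h0 (by linarith : 0 ≤ 1 - θ)
            (by positivity : 0 ≤ f P / m P) hvpos.le (by ring)
          calc _ ≤ (θ * (f P / m P) + (1 - θ) * v) * m P := by gcongr
            _ = _ := by field_simp
      _ = θ * ∑ P ∈ 𝒞, f P + (1 - θ) * v * ∑ P ∈ 𝒞, m P := by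
          rw [Finset.sum_add_distrib, Finset.mul_sum, Finset.mul_sum]
      _ ≤ θ * f Q + (1 - θ) * v * (m Q / 2) := by
          have : 0 ≤ (1 - θ) * v := mul_nonneg (by linarith) hvpos.le
          gcongr
      _ = f Q := by rw [hv]; field_simp; ring
  have hchild : ∑ P ∈ 𝒞, (f P / m P) ^ θ * m P ≤ 2 ^ (θ - 1) * ((f Q / m Q) ^ θ * m Q) := by
    refine le_of_mul_le_mul_right (key.trans (le_of_eq ?_)) (Real.rpow_pos_of_pos hvpos (1 - θ))
    have e1 : v ^ (1 - θ) = 2 ^ (1 - θ) * (f Q / m Q) ^ (1 - θ) :=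
      Real.mul_rpow (by norm_num) (by positivity)
    have e2 : (2 : ℝ) ^ (θ - 1) * 2 ^ (1 - θ) = 1 := by
      rw [← Real.rpow_add two_pos]; simp
    have e3 : (f Q / m Q) ^ θ * (f Q / m Q) ^ (1 - θ) = f Q / m Q := by
      rw [← Real.rpow_add (by positivity)]; simp
    calc f Q = (f Q / m Q) * m Q := by field_simp
      _ = (2 ^ (θ - 1) * 2 ^ (1 - θ)) * ((f Q / m Q) ^ θ * (f Q / m Q) ^ (1 - θ)) * m Q := by
        rw [e2, e3, one_mul]
      _ = _ := by rw [e1]; ring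
  calc (f Q / m Q) ^ θ * m Q + ∑ P ∈ 𝒞, ∑ Q' ∈ 𝒢 with Q' ⊆ P, (f Q' / m Q') ^ θ * m Q'
      ≤ (f Q / m Q) ^ θ * m Q +
          ∑ P ∈ 𝒞, (1 - 2 ^ (θ - 1))⁻¹ * ((f P / m P) ^ θ * m P) := by
        gcongr with P hP; exact ih P hP
    _ ≤ (f Q / m Q) ^ θ * m Q +
          (1 - 2 ^ (θ - 1))⁻¹ * (2 ^ (θ - 1) * ((f Q / m Q) ^ θ * m Q)) := by
        rw [← Finset.mul_sum]; gcongr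
    _ = _ := by field_simp; ring

/-- The Carleson-type estimate that replaces the `L¹`-boundedness of the geometric maximal
operator: `m`, `W`, `L` stand for the integrals of `1`, `w` and `log w`. -/
theorem sum_exp_average_le {𝒢 : Finset (Set X)} (hne : ∀ Q ∈ 𝒢, Q.Nonempty)
    (hlam : ∀ Q ∈ 𝒢, ∀ P ∈ 𝒢, Q ⊆ P ∨ P ⊆ Q ∨ Disjoint Q P) {m W L : Set X → ℝ}
    (hm : ∀ Q ∈ 𝒢, 0 < m Q)
    (hsum : ∀ Q ∈ 𝒢, ∀ 𝒞 ⊆ 𝒢, (𝒞 : Set (Set X)).PairwiseDisjoint id → (∀ P ∈ 𝒞, P ⊂ Q) →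
      ∑ P ∈ 𝒞, m P ≤ m Q / 2)
    (hexp : ∀ Q ∈ 𝒢, ∀ 𝒞 ⊆ 𝒢, (𝒞 : Set (Set X)).PairwiseDisjoint id → (∀ P ∈ 𝒞, P ⊂ Q) →
      ∀ s : ℝ, Real.exp s * ((1 - s) * (m Q - ∑ P ∈ 𝒞, m P) + (L Q - ∑ P ∈ 𝒞, L P)) ≤
        W Q - ∑ P ∈ 𝒞, W P) :
    ∀ Q ∈ 𝒢, ∑ Q' ∈ 𝒢 with Q' ⊆ Q, Real.exp (L Q' / m Q') * m Q' ≤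
      4 * W Q - Real.exp (L Q / m Q) * m Q := by
  refine laminar_induction hne hlam fun Q hQ 𝒞 h𝒞 hd hsub hdec ih => ?_
  rw [hdec]
  have hm2 := hsum Q hQ 𝒞 h𝒞 hd hsub
  have hmQ := hm Q hQ
  have hl : Real.log 4 = 2 * Real.log 2 := by
    rw [show (4 : ℝ) = 2 ^ 2 by norm_num, Real.log_pow]; norm_num
  have hlpos : 0 < Real.log 2 := Real.log_pos one_lt_two
  set M := ∑ P ∈ 𝒞, m P with hM
  set s := L Q / m Q + (m Q - M) / m Q * Real.log 4 with hs
  have hsm : s * m Q = L Q + (m Q - M) * Real.log 4 := by rw [hs]; field_simp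
  have hE := hexp Q hQ 𝒞 h𝒞 hd hsub (s - Real.log 4)
  have hexp4 : Real.exp s = 4 * Real.exp (s - Real.log 4) := by
    rw [Real.exp_sub, Real.exp_log (by norm_num)]; ring
  have hP : Real.exp s * ((1 - s) * M + ∑ P ∈ 𝒞, L P) ≤
      ∑ P ∈ 𝒞, Real.exp (L P / m P) * m P := by
    rw [hM, Finset.mul_sum, ← Finset.sum_add_distrib, Finset.mul_sum]
    refine Finset.sum_le_sum fun P hP => ?_
    have hmP := hm P (h𝒞 hP)
    calc Real.exp s * ((1 - s) * m P + L P)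
        = Real.exp s * (L P / m P - s + 1) * m P := by field_simp; ring
      _ ≤ Real.exp s * Real.exp (L P / m P - s) * m P := by
        gcongr; exact Real.add_one_le_exp _
      _ = _ := by rw [← Real.exp_add]; ring_nf
  have hx : 2 * Real.exp (L Q / m Q) ≤ Real.exp s := by
    have : Real.log 2 ≤ (m Q - M) / m Q * Real.log 4 := by
      have h : (1 : ℝ) / 2 ≤ (m Q - M) / m Q := by rw [div_le_div_iff₀ two_pos hmQ]; linarith
      rw [hl]; nlinarith
    calc 2 * Real.exp (L Q / m Q) = Real.exp (L Q / m Q + Real.log 2) := by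
          rw [Real.exp_add, Real.exp_log two_pos]; ring
      _ ≤ _ := Real.exp_le_exp.2 (by rw [hs]; linarith)
  have hx' := mul_le_mul_of_nonneg_right hx hmQ.le
  have hid : Real.exp s * m Q = Real.exp s * ((1 - s) * M + ∑ P ∈ 𝒞, L P) +
      4 * (Real.exp (s - Real.log 4) *
        ((1 - (s - Real.log 4)) * (m Q - M) + (L Q - ∑ P ∈ 𝒞, L P))) := by
    rw [← mul_assoc, ← hexp4]
    linear_combination (Real.exp s) * hsm
  have hih : ∑ P ∈ 𝒞, ∑ Q' ∈ 𝒢 with Q' ⊆ P, Real.exp (L Q' / m Q') * m Q' ≤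
      4 * ∑ P ∈ 𝒞, W P - ∑ P ∈ 𝒞, Real.exp (L P / m P) * m P := by
    rw [Finset.mul_sum, ← Finset.sum_sub_distrib]
    exact Finset.sum_le_sum ih
  linarith

end Laminar

theorem add_rpow_le_mul_add_mul {r η : ℝ} (hr : 0 < r) (hη : 0 < η) :
    ∃ C : ℝ, 0 ≤ C ∧ ∀ s l : ℝ, 0 ≤ s → 0 ≤ l → (s + l) ^ r ≤ (1 + η) * s ^ r + C * l ^ r := by
  set κ := (1 + η) ^ (1 / r) - 1 with hκ
  have hκpos : 0 < κ := sub_pos.2 (Real.one_lt_rpow (by linarith) (by positivity))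
  have hκr : (1 + κ) ^ r = 1 + η := by
    rw [hκ, add_sub_cancel, ← Real.rpow_mul (by linarith), one_div_mul_cancel hr.ne',
      Real.rpow_one]
  refine ⟨(1 + 1 / κ) ^ r, by positivity, fun s l hs hl => ?_⟩
  rcases le_total l (κ * s) with h | h
  · calc (s + l) ^ r ≤ ((1 + κ) * s) ^ r := by gcongr; linarith
      _ = (1 + η) * s ^ r := by rw [Real.mul_rpow (by positivity) hs, hκr]
      _ ≤ _ := le_add_of_nonneg_right (by positivity)
  · calc (s + l) ^ r ≤ ((1 + 1 / κ) * l) ^ r := by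
          gcongr
          have : s ≤ 1 / κ * l := by rw [one_div, inv_mul_eq_div, le_div_iff₀ hκpos]; linarith
          linarith
      _ = (1 + 1 / κ) ^ r * l ^ r := Real.mul_rpow (by positivity) hl
      _ ≤ _ := le_add_of_nonneg_left (by positivity)

theorem rpow_add_le_add_mul_rpow {q s l : ℝ} (hq : 1 < q) (hs : 0 ≤ s) (hl : 0 ≤ l) :
    (s + l) ^ q ≤ s ^ q + q * l * (s + l) ^ (q - 1) := by
  rcases (add_nonneg hs hl).eq_or_lt with h | h
  · have hs0 : s = 0 := by linarith
    have hl0 : l = 0 := by linarith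
    subst hs0 hl0; simp
  have hb := one_add_mul_self_le_rpow_one_add (s := s / (s + l) - 1) (p := q)
    (by have : 0 ≤ s / (s + l) := by positivity
        linarith) hq.le
  rw [add_sub_cancel, Real.div_rpow hs h.le, le_div_iff₀ (by positivity)] at hb
  have e : (s + l) ^ q = (s + l) ^ (q - 1) * (s + l) := by
    rw [← Real.rpow_add_one h.ne']; ring_nf
  have e2 : (1 + q * (s / (s + l) - 1)) * (s + l) ^ q =
      (s + l) ^ q - q * l * (s + l) ^ (q - 1) := by
    rw [e]; field_simp; ring
  linarith

/-- The inequality between the constants that drives the induction in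
`lintegral_rpow_sum_indicator_le`. -/
theorem exists_rpow_step_constants {q K : ℝ} (hq : 1 < q) (hK : 0 ≤ K) :
    ∃ B C : ℝ, 0 ≤ B ∧ 0 ≤ C ∧ ∀ s l m t : ℝ, 0 ≤ s → 0 ≤ l → 0 ≤ m → 0 ≤ t → t ≤ K * (l * m) →
      (s + l) ^ q * m + B * (s + l) ^ (q - 1) * t ≤
        s ^ q * m + B * s ^ (q - 1) * (l * m + t) + C * (l ^ q * m) := by
  obtain ⟨c, hc, h⟩ := add_rpow_le_mul_add_mul (r := q - 1) (η := (1 + 2 * K)⁻¹) (by linarith)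
    (by positivity)
  refine ⟨2 * q, q * c + 2 * q * K * c, by positivity, by positivity,
    fun s l m t hs hl hm ht htK => ?_⟩
  set η := (1 + 2 * K)⁻¹ with hη
  have hη1 : η * (1 + 2 * K) = 1 := inv_mul_cancel₀ (by positivity)
  have hηpos : 0 ≤ η := by positivity
  have h1 := mul_le_mul_of_nonneg_right (rpow_add_le_add_mul_rpow hq hs hl) hm
  have h2 := h s l hs hl
  set S := s ^ (q - 1)
  set A := l ^ (q - 1)
  have hS : 0 ≤ S := by positivity
  have hA : 0 ≤ A := by positivity
  have hlq : l ^ q = A * l := by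
    rcases hl.eq_or_lt with h | h
    · rw [← h, Real.zero_rpow (by linarith), mul_zero]
    · rw [← Real.rpow_add_one h.ne']; ring_nf
  have hlm : 0 ≤ l * m := by positivity
  have h3 : q * l * (s + l) ^ (q - 1) * m ≤ q * ((1 + η) * S + c * A) * (l * m) := by
    have := mul_le_mul_of_nonneg_left h2 (by positivity : 0 ≤ q * (l * m))
    linarith
  have h4 : 2 * q * (s + l) ^ (q - 1) * t ≤
      2 * q * (S * t) + 2 * q * (η * S + c * A) * (K * (l * m)) := by
    have a := mul_le_mul_of_nonneg_left h2 (by positivity : 0 ≤ 2 * q * t)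
    have b := mul_le_mul_of_nonneg_left htK (by positivity : 0 ≤ 2 * q * (η * S + c * A))
    linarith
  rw [hlq]
  have h5 : q * S * (l * m) * (η * (1 + 2 * K)) = q * S * (l * m) := by rw [hη1, mul_one]
  linarith

section LaminarIntegral

open scoped Classical

variable {X : Type*} [MeasurableSpace X]

theorem setLIntegral_eq_diff_add_sum {ν : Measure X} {𝒞 : Finset (Set X)} {A : Set X}
    (hmeas : ∀ P ∈ 𝒞, MeasurableSet P) (hd : (𝒞 : Set (Set X)).PairwiseDisjoint id)
    (hsub : ∀ P ∈ 𝒞, P ⊆ A) (g : X → ℝ≥0∞) :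
    ∫⁻ x in A, g x ∂ν =
      ∫⁻ x in A \ ⋃ P ∈ 𝒞, P, g x ∂ν + ∑ P ∈ 𝒞, ∫⁻ x in P, g x ∂ν := by
  have hU : MeasurableSet (⋃ P ∈ 𝒞, P) := Finset.measurableSet_biUnion _ hmeas
  rw [← lintegral_inter_add_sdiff g A hU, inter_eq_right.2 (iUnion₂_subset hsub), add_comm]
  congr 1
  exact lintegral_biUnion_finset hd hmeas g

/-- If the numbers `l Q` satisfy a Carleson condition with respect to `ν`, the summands of
`∑ l_Q χ_Q` are quasi-orthogonal in `L^q(ν)`. -/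
theorem lintegral_rpow_sum_indicator_le {ν : Measure X} {𝒢 : Finset (Set X)}
    (hne : ∀ Q ∈ 𝒢, Q.Nonempty) (hmeas : ∀ Q ∈ 𝒢, MeasurableSet Q) (hfin : ∀ Q ∈ 𝒢, ν Q ≠ ∞)
    (hlam : ∀ Q ∈ 𝒢, ∀ P ∈ 𝒢, Q ⊆ P ∨ P ⊆ Q ∨ Disjoint Q P) {l : Set X → ℝ}
    (hl : ∀ Q, 0 ≤ l Q) {q K B C : ℝ} (hq : 1 < q) (hB : 0 ≤ B) (hC : 0 ≤ C)
    (hcar : ∀ Q ∈ 𝒢, ∑ Q' ∈ 𝒢 with Q' ⊆ Q, l Q' * ν.real Q' ≤ K * (l Q * ν.real Q))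
    (hnum : ∀ s l m t : ℝ, 0 ≤ s → 0 ≤ l → 0 ≤ m → 0 ≤ t → t ≤ K * (l * m) →
      (s + l) ^ q * m + B * (s + l) ^ (q - 1) * t ≤
        s ^ q * m + B * s ^ (q - 1) * (l * m + t) + C * (l ^ q * m)) :
    ∫⁻ x, ENNReal.ofReal ((∑ Q ∈ 𝒢, Q.indicator (fun _ => l Q) x) ^ q) ∂ν ≤
      ENNReal.ofReal (C * ∑ Q ∈ 𝒢, l Q ^ q * ν.real Q) := by
  set F : Set X → X → ℝ := fun Q x => ∑ Q' ∈ 𝒢 with Q' ⊆ Q, Q'.indicator (fun _ => l Q') x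
    with hF
  have hFzero : ∀ Q x, x ∉ Q → F Q x = 0 := fun Q x hx =>
    Finset.sum_eq_zero fun Q' hQ' =>
      indicator_of_notMem (fun h => hx ((Finset.mem_filter.1 hQ').2 h)) _
  have hFsum : ∀ 𝒞 : Finset (Set X), (𝒞 : Set (Set X)).PairwiseDisjoint id →
      ∀ P ∈ 𝒞, ∀ x ∈ P, ∑ P' ∈ 𝒞, F P' x = F P x := fun 𝒞 hd P hP x hx =>
    Finset.sum_eq_single_of_mem P hP fun P' hP' hne' =>
      hFzero P' x fun hx' => Set.disjoint_left.1 (hd hP' hP hne') hx' hx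
  have hlq : ∀ Q, 0 ≤ l Q ^ q * ν.real Q := fun Q =>
    mul_nonneg (Real.rpow_nonneg (hl Q) _) measureReal_nonneg
  have hlm : ∀ Q, 0 ≤ l Q * ν.real Q := fun Q => mul_nonneg (hl Q) measureReal_nonneg
  have main : ∀ Q ∈ 𝒢, ∀ s : ℝ, 0 ≤ s →
      ∫⁻ x in Q, ENNReal.ofReal ((s + F Q x) ^ q) ∂ν ≤
        ENNReal.ofReal (s ^ q * ν.real Q +
          B * s ^ (q - 1) * ∑ Q' ∈ 𝒢 with Q' ⊆ Q, l Q' * ν.real Q' +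
          C * ∑ Q' ∈ 𝒢 with Q' ⊆ Q, l Q' ^ q * ν.real Q') := by
    refine laminar_induction hne hlam fun Q hQ 𝒞 h𝒞 hd hsub hdec ih s hs => ?_
    have hmeas𝒞 : ∀ P ∈ 𝒞, MeasurableSet P := fun P hP => hmeas P (h𝒞 hP)
    have hU : MeasurableSet (⋃ P ∈ 𝒞, P) := Finset.measurableSet_biUnion _ hmeas𝒞
    have hFQ : ∀ x ∈ Q, F Q x = l Q + ∑ P ∈ 𝒞, F P x := fun x hx => by
      have h := hdec fun Q' => Q'.indicator (fun _ => l Q') x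
      rw [indicator_of_mem hx] at h
      exact h
    have hsl : 0 ≤ s + l Q := add_nonneg hs (hl Q)
    set D := Q \ ⋃ P ∈ 𝒞, P with hD
    have hDfin : ν D ≠ ∞ := ne_top_of_le_ne_top (hfin Q hQ) (measure_mono sdiff_subset)
    have hE : ∫⁻ x in D, ENNReal.ofReal ((s + F Q x) ^ q) ∂ν =
        ENNReal.ofReal ((s + l Q) ^ q * ν.real D) := by
      rw [setLIntegral_congr_fun (g := fun _ => ENNReal.ofReal ((s + l Q) ^ q))
        ((hmeas Q hQ).diff hU) fun x hx => ?_, setLIntegral_const,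
        ENNReal.ofReal_mul (by positivity), ofReal_measureReal hDfin]
      have h0 : ∑ P ∈ 𝒞, F P x = 0 := Finset.sum_eq_zero fun P hP =>
        hFzero P x fun hxP => hx.2 (mem_biUnion (show P ∈ (𝒞 : Set (Set X)) from hP) hxP)
      simp only [hFQ x hx.1, h0, add_zero]
    have hmQ : ν.real Q = ν.real D + ∑ P ∈ 𝒞, ν.real P := by
      have h1 := measureReal_sdiff_add_inter (μ := ν) (s := Q) hU (h := hfin Q hQ)
      rw [inter_eq_right.2 (iUnion₂_subset fun P hP => (hsub P hP).subset)] at h1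
      rw [← h1]
      congr 1
      exact measureReal_biUnion_finset hd hmeas𝒞 fun P hP => hfin P (h𝒞 hP)
    set T : Set X → ℝ := fun P => ∑ Q' ∈ 𝒢 with Q' ⊆ P, l Q' * ν.real Q' with hT
    set Φ : Set X → ℝ := fun P => ∑ Q' ∈ 𝒢 with Q' ⊆ P, l Q' ^ q * ν.real Q' with hΦ
    have hTnn : ∀ P, 0 ≤ T P := fun P => Finset.sum_nonneg fun _ _ => hlm _
    have hΦnn : ∀ P, 0 ≤ Φ P := fun P => Finset.sum_nonneg fun _ _ => hlq _
    have hTQ : T Q = l Q * ν.real Q + ∑ P ∈ 𝒞, T P := hdec _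
    have hΦQ : Φ Q = l Q ^ q * ν.real Q + ∑ P ∈ 𝒞, Φ P := hdec _
    have hterm : ∀ P, 0 ≤ (s + l Q) ^ q * ν.real P + B * (s + l Q) ^ (q - 1) * T P + C * Φ P :=
      fun P => by have := hTnn P; have := hΦnn P; positivity
    rw [setLIntegral_eq_diff_add_sum hmeas𝒞 hd fun P hP => (hsub P hP).subset, ← hD, hE]
    calc _ ≤ ENNReal.ofReal ((s + l Q) ^ q * ν.real D) + ∑ P ∈ 𝒞,
          ENNReal.ofReal ((s + l Q) ^ q * ν.real P +
            B * (s + l Q) ^ (q - 1) * T P + C * Φ P) := by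
          gcongr with P hP
          refine le_of_eq_of_le (setLIntegral_congr_fun (hmeas𝒞 P hP) fun x hx => ?_)
            (ih P hP (s + l Q) hsl)
          simp only [hFQ x ((hsub P hP).subset hx), hFsum 𝒞 hd P hP x hx, add_assoc]
      _ = ENNReal.ofReal ((s + l Q) ^ q * ν.real D + ∑ P ∈ 𝒞, ((s + l Q) ^ q * ν.real P +
            B * (s + l Q) ^ (q - 1) * T P + C * Φ P)) := by
          rw [ENNReal.ofReal_add (by positivity) (Finset.sum_nonneg fun P _ => hterm P),
            ENNReal.ofReal_sum_of_nonneg fun P _ => hterm P]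
      _ ≤ _ := by
          refine ENNReal.ofReal_le_ofReal ?_
          change _ ≤ s ^ q * ν.real Q + B * s ^ (q - 1) * T Q + C * Φ Q
          rw [Finset.sum_add_distrib, Finset.sum_add_distrib, ← Finset.mul_sum, ← Finset.mul_sum,
            ← Finset.mul_sum, hTQ, hΦQ]
          have h1 := hnum s (l Q) (ν.real Q) (∑ P ∈ 𝒞, T P) hs (hl Q) measureReal_nonneg
            (Finset.sum_nonneg fun P _ => hTnn P)
            (by have h : T Q ≤ K * (l Q * ν.real Q) := hcar Q hQ
                have := hlm Q
                linarith)
          have h2 : (s + l Q) ^ q * ν.real Q =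
              (s + l Q) ^ q * ν.real D + (s + l Q) ^ q * ∑ P ∈ 𝒞, ν.real P := by
            rw [hmQ, mul_add]
          linarith
  obtain ⟨𝒞, h𝒞, hd, hcov⟩ := exists_disjoint_cover hlam
  have hmeas𝒞 : ∀ P ∈ 𝒞, MeasurableSet P := fun P hP => hmeas P (h𝒞 hP)
  have hU : MeasurableSet (⋃ P ∈ 𝒞, P) := Finset.measurableSet_biUnion _ hmeas𝒞
  have hsum : ∀ x, ∑ Q ∈ 𝒢, Q.indicator (fun _ => l Q) x = ∑ P ∈ 𝒞, F P x := fun x =>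
    sum_eq_sum_cover hne hd hcov fun Q => Q.indicator (fun _ => l Q) x
  rw [← setLIntegral_univ, setLIntegral_eq_diff_add_sum hmeas𝒞 hd fun P _ => subset_univ P,
    setLIntegral_congr_fun (g := fun _ => 0) (MeasurableSet.univ.diff hU) fun x hx => ?_,
    lintegral_zero, zero_add, sum_eq_sum_cover hne hd hcov, Finset.mul_sum,
    ENNReal.ofReal_sum_of_nonneg fun P _ => mul_nonneg hC (Finset.sum_nonneg fun _ _ => hlq _)]
  · refine Finset.sum_le_sum fun P hP => ?_
    have h := main P (h𝒞 hP) 0 le_rfl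
    rw [Real.zero_rpow (by linarith), Real.zero_rpow (by linarith)] at h
    simp only [zero_mul, mul_zero, zero_add] at h
    refine le_of_eq_of_le (setLIntegral_congr_fun (hmeas𝒞 P hP) fun x hx => ?_) h
    simp only [hsum, hFsum 𝒞 hd P hP x hx]
  · have h0 : ∑ P ∈ 𝒞, F P x = 0 := Finset.sum_eq_zero fun P hP =>
      hFzero P x fun hxP => hx.2 (mem_biUnion (show P ∈ (𝒞 : Set (Set X)) from hP) hxP)
    simp only [hsum, h0]
    rw [Real.zero_rpow (by linarith), ENNReal.ofReal_zero]

end LaminarIntegral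

section Jensen

variable {X : Type*} [MeasurableSpace X] {μ : Measure X} {E : Set X} {g : X → ℝ}

/-- Jensen's inequality for the exponential, through its tangent line at `s`. -/
theorem exp_mul_le_setIntegral (hfin : μ E ≠ ∞) (hpos : ∀ x, 0 < g x) (hg : IntegrableOn g E μ)
    (hlog : IntegrableOn (fun x => Real.log (g x)) E μ) (s : ℝ) :
    Real.exp s * ((1 - s) * μ.real E + ∫ x in E, Real.log (g x) ∂μ) ≤ ∫ x in E, g x ∂μ := by
  have hc : IntegrableOn (fun _ => 1 - s) E μ := integrableOn_const hfin
  calc Real.exp s * ((1 - s) * μ.real E + ∫ x in E, Real.log (g x) ∂μ)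
      = ∫ x in E, Real.exp s * (1 - s + Real.log (g x)) ∂μ := by
        rw [integral_const_mul, integral_add hc hlog, setIntegral_const, smul_eq_mul,
          mul_comm (μ.real E)]
    _ ≤ ∫ x in E, g x ∂μ := by
        refine integral_mono ((hc.add hlog).const_mul _) hg fun x => ?_
        calc Real.exp s * (1 - s + Real.log (g x))
            = Real.exp s * (Real.log (g x) - s + 1) := by ring
          _ ≤ Real.exp s * Real.exp (Real.log (g x) - s) := by
            gcongr; exact Real.add_one_le_exp _
          _ = g x := by rw [← Real.exp_add, add_sub_cancel, Real.exp_log (hpos x)]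

end Jensen

section Weights

variable {n : ℕ}

theorem avg_eq_div (Q : Set (Fin n → ℝ)) (f : (Fin n → ℝ) → ℝ) :
    avg Q f = (∫ x in Q, f x) / volume.real Q := by
  rw [avg, div_eq_inv_mul]; rfl

theorem avg_congr_set {Q Q' : Set (Fin n → ℝ)} (h : Q =ᵐ[volume] Q')
    (f : (Fin n → ℝ) → ℝ) : avg Q f = avg Q' f := by
  rw [avg, avg, measure_congr h, setIntegral_congr_set h]

/-- A set of positive finite measure on which `w`, `w^{-1/(p-1)}` and `log w` are integrable. -/
structure IsAdmissible (p : ℝ) (w : (Fin n → ℝ) → ℝ) (Q : Set (Fin n → ℝ)) : Prop where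
  measurableSet : MeasurableSet Q
  pos : 0 < volume.real Q
  ne_top : volume Q ≠ ∞
  integrableOn : IntegrableOn w Q
  integrableOn_dual : IntegrableOn (fun x => w x ^ (-(1 / (p - 1)))) Q
  integrableOn_log : IntegrableOn (fun x => Real.log (w x)) Q

namespace IsAdmissible

variable {p : ℝ} {w : (Fin n → ℝ) → ℝ} {Q : Set (Fin n → ℝ)}

theorem nonempty (h : IsAdmissible p w Q) : Q.Nonempty := by
  rw [Set.nonempty_iff_ne_empty]
  rintro rfl
  simpa using h.pos

theorem exp_avg_log_le {g : (Fin n → ℝ) → ℝ} (h : IsAdmissible p w Q) (hpos : ∀ x, 0 < g x)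
    (hg : IntegrableOn g Q) (hlog : IntegrableOn (fun x => Real.log (g x)) Q) :
    Real.exp (avg Q fun x => Real.log (g x)) ≤ avg Q g := by
  have hm := h.pos
  have := exp_mul_le_setIntegral h.ne_top hpos hg hlog (avg Q fun x => Real.log (g x))
  rw [avg_eq_div Q g, le_div_iff₀ hm]
  refine le_of_eq_of_le ?_ this
  rw [avg_eq_div]
  field_simp
  ring

theorem avg_pos (h : IsAdmissible p w Q) (hw : ∀ x, 0 < w x) : 0 < avg Q w :=
  (Real.exp_pos _).trans_le (h.exp_avg_log_le hw h.integrableOn h.integrableOn_log)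

theorem exp_le_avg_dual (h : IsAdmissible p w Q) (hw : ∀ x, 0 < w x) :
    Real.exp (-(1 / (p - 1)) * avg Q fun x => Real.log (w x)) ≤
      avg Q fun x => w x ^ (-(1 / (p - 1))) := by
  have e : (fun x => Real.log (w x ^ (-(1 / (p - 1))))) =
      fun x => -(1 / (p - 1)) * Real.log (w x) := funext fun x => Real.log_rpow (hw x) _
  have := h.exp_avg_log_le (g := fun x => w x ^ (-(1 / (p - 1))))
    (fun x => Real.rpow_pos_of_pos (hw x) _) h.integrableOn_dual
    (by rw [e]; exact h.integrableOn_log.const_mul _)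
  rw [e] at this
  refine le_of_eq_of_le ?_ this
  rw [avg, avg, integral_const_mul]
  congr 1
  ring

theorem avg_dual_pos (h : IsAdmissible p w Q) (hw : ∀ x, 0 < w x) :
    0 < avg Q fun x => w x ^ (-(1 / (p - 1))) :=
  (Real.exp_pos _).trans_le (h.exp_le_avg_dual hw)

theorem one_le_AexpQ (h : IsAdmissible p w Q) (hw : ∀ x, 0 < w x) : 1 ≤ AexpQ w Q := by
  rw [AexpQ, Real.exp_neg, ← div_eq_mul_inv, one_le_div (Real.exp_pos _)]
  exact h.exp_avg_log_le hw h.integrableOn h.integrableOn_log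

theorem AexpQ_le_ApQ (h : IsAdmissible p w Q) (hp : 1 < p) (hw : ∀ x, 0 < w x) :
    AexpQ w Q ≤ ApQ p w Q := by
  have hp' : 0 < p - 1 := by linarith
  have h1 := Real.rpow_le_rpow (Real.exp_pos _).le (h.exp_le_avg_dual hw) hp'.le
  rw [← Real.exp_mul] at h1
  refine mul_le_mul_of_nonneg_left (le_of_eq_of_le ?_ h1) (h.avg_pos hw).le
  congr 1
  field_simp

theorem ApQ_pos (h : IsAdmissible p w Q) (hw : ∀ x, 0 < w x) : 0 < ApQ p w Q :=
  mul_pos (h.avg_pos hw) (Real.rpow_pos_of_pos (h.avg_dual_pos hw) _)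

theorem mixed_le_ApQ (h : IsAdmissible p w Q) (hp : 1 < p) (hw : ∀ x, 0 < w x) :
    ApQ p w Q ^ (1 / p) * AexpQ w Q ^ ((p - 1) / p) ≤ ApQ p w Q := by
  have hA := h.ApQ_pos hw
  have hE : 0 ≤ AexpQ w Q := zero_le_one.trans (h.one_le_AexpQ hw)
  have hp' : 0 ≤ (p - 1) / p := div_nonneg (by linarith) (by linarith)
  calc ApQ p w Q ^ (1 / p) * AexpQ w Q ^ ((p - 1) / p)
      ≤ ApQ p w Q ^ (1 / p) * ApQ p w Q ^ ((p - 1) / p) := by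
        gcongr; exact h.AexpQ_le_ApQ hp hw
    _ = ApQ p w Q := by
        rw [← Real.rpow_add hA, ← add_div, add_sub_cancel, div_self (by linarith), Real.rpow_one]

theorem avg_rpow_mul_avg_dual (h : IsAdmissible p w Q) (hp : 1 < p) (hw : ∀ x, 0 < w x) :
    avg Q w ^ (p / (p - 1)) * (avg Q fun x => w x ^ (-(1 / (p - 1)))) =
      (ApQ p w Q ^ (1 / p) * AexpQ w Q ^ ((p - 1) / p)) ^ (p / (p - 1)) *
        Real.exp (avg Q fun x => Real.log (w x)) := by
  have hp' : p - 1 ≠ 0 := by linarith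
  have hp0 : p ≠ 0 := by linarith
  have ha := h.avg_pos hw
  have hs := h.avg_dual_pos hw
  have hA := h.ApQ_pos hw
  have hE : 0 ≤ AexpQ w Q := zero_le_one.trans (h.one_le_AexpQ hw)
  rw [Real.mul_rpow (by positivity) (by positivity), ← Real.rpow_mul hA.le, ← Real.rpow_mul hE,
    show (p - 1) / p * (p / (p - 1)) = 1 by field_simp, Real.rpow_one,
    show 1 / p * (p / (p - 1)) = 1 / (p - 1) by field_simp, ApQ, AexpQ,
    Real.mul_rpow ha.le (by positivity), ← Real.rpow_mul hs.le, mul_one_div_cancel hp',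
    Real.rpow_one, show p / (p - 1) = 1 / (p - 1) + 1 by field_simp; ring,
    Real.rpow_add_one ha.ne', mul_assoc (_ * _), mul_assoc (avg Q w) (Real.exp _),
    ← Real.exp_add, neg_add_cancel, Real.exp_zero]
  ring

/-- The factorization through which `⨍ w · ⨍ σ` is controlled by the average of a single
function once `ApQ` is frozen. -/
theorem exists_avg_mul_avg_dual_eq (hp : 1 < p) : ∃ t θ : ℝ, 0 ≤ t ∧ 0 ≤ θ ∧ θ < 1 ∧
    ((∀ (w : (Fin n → ℝ) → ℝ) (Q : Set (Fin n → ℝ)), IsAdmissible p w Q → (∀ x, 0 < w x) →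
      avg Q w * (avg Q fun x => w x ^ (-(1 / (p - 1)))) = ApQ p w Q ^ t * avg Q w ^ θ) ∨
    (∀ (w : (Fin n → ℝ) → ℝ) (Q : Set (Fin n → ℝ)), IsAdmissible p w Q → (∀ x, 0 < w x) →
      avg Q w * (avg Q fun x => w x ^ (-(1 / (p - 1)))) =
        ApQ p w Q ^ t * (avg Q fun x => w x ^ (-(1 / (p - 1)))) ^ θ)) := by
  have hp' : 0 < p - 1 := by linarith
  rcases le_total 2 p with h | h
  · refine ⟨1 / (p - 1), (p - 2) / (p - 1), by positivity, div_nonneg (by linarith) hp'.le,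
      (div_lt_one hp').2 (by linarith), Or.inl fun w Q hQ hw => ?_⟩
    have ha := hQ.avg_pos hw
    have hs := hQ.avg_dual_pos hw
    rw [ApQ, Real.mul_rpow ha.le (by positivity), ← Real.rpow_mul hs.le,
      mul_one_div_cancel hp'.ne', Real.rpow_one, mul_right_comm, ← Real.rpow_add ha, ← add_div,
      show 1 + (p - 2) = p - 1 by ring, div_self hp'.ne', Real.rpow_one]
  · refine ⟨1, 2 - p, by norm_num, by linarith, by linarith, Or.inr fun w Q hQ hw => ?_⟩
    have hs := hQ.avg_dual_pos hw
    rw [ApQ, Real.rpow_one, mul_assoc, ← Real.rpow_add hs, show p - 1 + (2 - p) = 1 by ring,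
      Real.rpow_one]

end IsAdmissible

section FiniteTesting

open scoped Classical

theorem withDensity_ofReal_real {p : ℝ} {w : (Fin n → ℝ) → ℝ} {Q : Set (Fin n → ℝ)}
    (h : IsAdmissible p w Q) (hw : ∀ x, 0 < w x) :
    (volume.withDensity fun x => ENNReal.ofReal (w x ^ (-(1 / (p - 1))))) Q =
      ENNReal.ofReal ((avg Q fun x => w x ^ (-(1 / (p - 1)))) * volume.real Q) := by
  have := h.pos
  rw [withDensity_apply _ h.measurableSet, ← ofReal_integral_eq_lintegral_ofReal
    h.integrableOn_dual (ae_of_all _ fun x => (Real.rpow_pos_of_pos (hw x) _).le), avg_eq_div]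
  congr 1
  field_simp

/-- A finite laminar family of admissible sets with the packing condition. -/
structure IsSparseLaminar (p : ℝ) (w : (Fin n → ℝ) → ℝ) (𝒢 : Finset (Set (Fin n → ℝ))) :
    Prop where
  admissible : ∀ Q ∈ 𝒢, IsAdmissible p w Q
  laminar : ∀ Q ∈ 𝒢, ∀ P ∈ 𝒢, Q ⊆ P ∨ P ⊆ Q ∨ Disjoint Q P
  packing : ∀ Q ∈ 𝒢, ∀ 𝒞 ⊆ 𝒢, (𝒞 : Set (Set (Fin n → ℝ))).PairwiseDisjoint id →
    (∀ P ∈ 𝒞, P ⊂ Q) → ∑ P ∈ 𝒞, volume.real P ≤ volume.real Q / 2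

namespace IsSparseLaminar

variable {p : ℝ} {w : (Fin n → ℝ) → ℝ} {𝒢 ℋ : Finset (Set (Fin n → ℝ))}

theorem mono (h : IsSparseLaminar p w 𝒢) (hsub : ℋ ⊆ 𝒢) : IsSparseLaminar p w ℋ where
  admissible Q hQ := h.admissible Q (hsub hQ)
  laminar Q hQ P hP := h.laminar Q (hsub hQ) P (hsub hP)
  packing Q hQ 𝒞 h𝒞 := h.packing Q (hsub hQ) 𝒞 (h𝒞.trans hsub)

theorem sum_setIntegral_le (h : IsSparseLaminar p w 𝒢) {f : (Fin n → ℝ) → ℝ}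
    (hf : ∀ x, 0 < f x) {A : Set (Fin n → ℝ)} (hA : IntegrableOn f A)
    {𝒞 : Finset (Set (Fin n → ℝ))} (h𝒞 : 𝒞 ⊆ 𝒢)
    (hd : (𝒞 : Set (Set (Fin n → ℝ))).PairwiseDisjoint id) (hsub : ∀ P ∈ 𝒞, P ⊆ A) :
    ∑ P ∈ 𝒞, ∫ x in P, f x ≤ ∫ x in A, f x := by
  rw [← integral_biUnion_finset 𝒞 (fun P hP => (h.admissible P (h𝒞 hP)).measurableSet) hd
    fun P hP => hA.mono_set (hsub P hP)]
  exact setIntegral_mono_set hA (ae_of_all _ fun x => (hf x).le)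
    (iUnion₂_subset hsub).eventuallyLE

theorem sum_avg_rpow_le (h : IsSparseLaminar p w 𝒢) {f : (Fin n → ℝ) → ℝ} (hf : ∀ x, 0 < f x)
    (hfint : ∀ Q ∈ 𝒢, IntegrableOn f Q) (hpos : ∀ Q ∈ 𝒢, 0 < avg Q f)
    {θ : ℝ} (h0 : 0 ≤ θ) (h1 : θ < 1) :
    ∀ Q ∈ 𝒢, ∑ Q' ∈ 𝒢 with Q' ⊆ Q, avg Q' f ^ θ * volume.real Q' ≤
      (1 - 2 ^ (θ - 1))⁻¹ * (avg Q f ^ θ * volume.real Q) := by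
  simp only [avg_eq_div] at hpos ⊢
  refine sum_average_rpow_le (m := volume.real) (f := fun Q => ∫ x in Q, f x)
    (fun Q hQ => (h.admissible Q hQ).nonempty) h.laminar (fun Q hQ => (h.admissible Q hQ).pos)
    (fun Q hQ => ?_) (fun Q hQ 𝒞 h𝒞 hd hsub => ⟨h.packing Q hQ 𝒞 h𝒞 hd hsub, ?_⟩) h0 h1
  · have := hpos Q hQ
    have hm := (h.admissible Q hQ).pos
    rwa [div_pos_iff_of_pos_right hm] at this
  · exact h.sum_setIntegral_le hf (hfint Q hQ) h𝒞 hd fun P hP => (hsub P hP).subset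

theorem sum_exp_avg_log_le (h : IsSparseLaminar p w 𝒢) (hw : ∀ x, 0 < w x)
    {R : Set (Fin n → ℝ)} (hR : IntegrableOn w R) (hsub : ∀ Q ∈ 𝒢, Q ⊆ R) :
    ∑ Q ∈ 𝒢, Real.exp (avg Q fun x => Real.log (w x)) * volume.real Q ≤
      4 * ∫ x in R, w x := by
  have hne : ∀ Q ∈ 𝒢, Q.Nonempty := fun Q hQ => (h.admissible Q hQ).nonempty
  have hE := sum_exp_average_le (m := volume.real) (W := fun Q => ∫ x in Q, w x)
    (L := fun Q => ∫ x in Q, Real.log (w x)) hne h.laminar (fun Q hQ => (h.admissible Q hQ).pos)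
    h.packing ?_
  · obtain ⟨𝒞, h𝒞, hd, hcov⟩ := exists_disjoint_cover h.laminar
    rw [sum_eq_sum_cover hne hd hcov]
    calc _ ≤ ∑ P ∈ 𝒞, 4 * ∫ x in P, w x := by
          refine Finset.sum_le_sum fun P hP => ?_
          have hP1 := hE P (h𝒞 hP)
          simp only [avg_eq_div]
          have : 0 ≤ Real.exp ((∫ x in P, Real.log (w x)) / volume.real P) * volume.real P := by
            positivity
          linarith
      _ ≤ _ := by
          rw [← Finset.mul_sum]
          gcongr
          exact h.sum_setIntegral_le hw hR h𝒞 hd fun P hP => hsub P (h𝒞 hP)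
  · intro Q hQ 𝒞 h𝒞 hd hs s
    have hQa := h.admissible Q hQ
    have hmeas : ∀ P ∈ 𝒞, MeasurableSet P := fun P hP => (h.admissible P (h𝒞 hP)).measurableSet
    have hU : MeasurableSet (⋃ P ∈ 𝒞, P) := Finset.measurableSet_biUnion _ hmeas
    have hUQ : (⋃ P ∈ 𝒞, P) ⊆ Q := iUnion₂_subset fun P hP => (hs P hP).subset
    have hsplit : ∀ f : (Fin n → ℝ) → ℝ, IntegrableOn f Q →
        (∫ x in Q, f x) - ∑ P ∈ 𝒞, ∫ x in P, f x = ∫ x in Q \ ⋃ P ∈ 𝒞, P, f x := fun f hf => by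
      rw [setIntegral_sdiff hU hf hUQ, integral_biUnion_finset 𝒞 hmeas hd
        fun P hP => hf.mono_set (hs P hP).subset]
    have hvol : volume.real Q - ∑ P ∈ 𝒞, volume.real P =
        volume.real (Q \ ⋃ P ∈ 𝒞, P) := by
      rw [measureReal_sdiff hUQ hU hQa.ne_top]
      congr 1
      exact (measureReal_biUnion_finset hd hmeas
        fun P hP => (h.admissible P (h𝒞 hP)).ne_top).symm
    rw [hvol, hsplit _ hQa.integrableOn, hsplit _ hQa.integrableOn_log]
    exact exp_mul_le_setIntegral
      (ne_top_of_le_ne_top hQa.ne_top (measure_mono sdiff_subset)) hw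
      (hQa.integrableOn.mono_set sdiff_subset) (hQa.integrableOn_log.mono_set sdiff_subset) s

end IsSparseLaminar

/-- The testing bound for a finite family on which `ApQ` is frozen. -/
theorem exists_lintegral_frozen_le {p : ℝ} (hp : 1 < p) (n : ℕ) :
    ∃ C : ℝ, 0 ≤ C ∧ ∀ (w : (Fin n → ℝ) → ℝ) (𝒢 : Finset (Set (Fin n → ℝ))),
      (∀ x, 0 < w x) → IsSparseLaminar p w 𝒢 →
      (∀ Q ∈ 𝒢, ∀ Q' ∈ 𝒢, ApQ p w Q' ≤ Real.exp 1 * ApQ p w Q) →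
      ∫⁻ x, ENNReal.ofReal ((∑ Q ∈ 𝒢, Q.indicator (fun _ => |avg Q w|) x) ^ (p / (p - 1)))
        ∂(volume.withDensity fun x => ENNReal.ofReal (w x ^ (-(1 / (p - 1))))) ≤
      ENNReal.ofReal (C * ∑ Q ∈ 𝒢, avg Q w ^ (p / (p - 1)) *
        ((avg Q fun x => w x ^ (-(1 / (p - 1)))) * volume.real Q)) := by
  obtain ⟨t, θ, ht, h0, h1, hfac⟩ := IsAdmissible.exists_avg_mul_avg_dual_eq (n := n) hp
  have h2 : (2 : ℝ) ^ (θ - 1) < 1 := Real.rpow_lt_one_of_one_lt_of_neg one_lt_two (by linarith)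
  set K := Real.exp 1 ^ t * (1 - (2 : ℝ) ^ (θ - 1))⁻¹ with hK
  have hKpos : 0 ≤ K := by
    have : 0 < 1 - (2 : ℝ) ^ (θ - 1) := by linarith
    positivity
  have hq : 1 < p / (p - 1) := by rw [lt_div_iff₀ (by linarith)]; linarith
  obtain ⟨B, C, hB, hC, hnum⟩ := exists_rpow_step_constants hq hKpos
  refine ⟨C, hC, fun w 𝒢 hw h hfr => ?_⟩
  set ν := volume.withDensity fun x => ENNReal.ofReal (w x ^ (-(1 / (p - 1)))) with hν
  have hνQ : ∀ Q ∈ 𝒢, ν.real Q =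
      (avg Q fun x => w x ^ (-(1 / (p - 1)))) * volume.real Q := fun Q hQ => by
    have hQa := h.admissible Q hQ
    rw [measureReal_def, withDensity_ofReal_real hQa hw, ENNReal.toReal_ofReal]
    exact mul_nonneg (hQa.avg_dual_pos hw).le hQa.pos.le
  have habs : ∀ Q ∈ 𝒢, |avg Q w| = avg Q w := fun Q hQ =>
    abs_of_pos ((h.admissible Q hQ).avg_pos hw)
  have hsum : ∑ Q ∈ 𝒢, avg Q w ^ (p / (p - 1)) *
      ((avg Q fun x => w x ^ (-(1 / (p - 1)))) * volume.real Q) =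
      ∑ Q ∈ 𝒢, |avg Q w| ^ (p / (p - 1)) * ν.real Q :=
    Finset.sum_congr rfl fun Q hQ => by rw [hνQ Q hQ, habs Q hQ]
  rw [hsum]
  refine lintegral_rpow_sum_indicator_le (fun Q hQ => (h.admissible Q hQ).nonempty)
    (fun Q hQ => (h.admissible Q hQ).measurableSet) (fun Q hQ => ?_) h.laminar
    (fun Q => abs_nonneg _) hq hB hC (fun Q hQ => ?_) hnum
  · rw [withDensity_ofReal_real (h.admissible Q hQ) hw]
    exact ENNReal.ofReal_ne_top
  · obtain ⟨f, hfpos, hfint, hfavg, hfeq⟩ : ∃ f : (Fin n → ℝ) → ℝ, (∀ x, 0 < f x) ∧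
        (∀ Q ∈ 𝒢, IntegrableOn f Q) ∧ (∀ Q ∈ 𝒢, 0 < avg Q f) ∧
        ∀ Q ∈ 𝒢, avg Q w * (avg Q fun x => w x ^ (-(1 / (p - 1)))) =
          ApQ p w Q ^ t * avg Q f ^ θ := by
      rcases hfac with hf | hf
      · exact ⟨w, hw, fun Q hQ => (h.admissible Q hQ).integrableOn,
          fun Q hQ => (h.admissible Q hQ).avg_pos hw, fun Q hQ => hf w Q (h.admissible Q hQ) hw⟩
      · exact ⟨fun x => w x ^ (-(1 / (p - 1))), fun x => Real.rpow_pos_of_pos (hw x) _,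
          fun Q hQ => (h.admissible Q hQ).integrableOn_dual,
          fun Q hQ => (h.admissible Q hQ).avg_dual_pos hw,
          fun Q hQ => hf w Q (h.admissible Q hQ) hw⟩
    have hterm : ∀ Q ∈ 𝒢, |avg Q w| * ν.real Q =
        ApQ p w Q ^ t * (avg Q f ^ θ * volume.real Q) := fun Q hQ => by
      rw [habs Q hQ, hνQ Q hQ, ← mul_assoc, hfeq Q hQ, mul_assoc]
    have hA := (h.admissible Q hQ).ApQ_pos hw
    calc ∑ Q' ∈ 𝒢 with Q' ⊆ Q, |avg Q' w| * ν.real Q'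
        ≤ ∑ Q' ∈ 𝒢 with Q' ⊆ Q,
            (Real.exp 1 * ApQ p w Q) ^ t * (avg Q' f ^ θ * volume.real Q') := by
          refine Finset.sum_le_sum fun Q' hQ' => ?_
          have hQ'𝒢 := (Finset.mem_filter.1 hQ').1
          have hA' := (h.admissible Q' hQ'𝒢).ApQ_pos hw
          have hf' := hfavg Q' hQ'𝒢
          rw [hterm Q' hQ'𝒢]
          gcongr
          exact hfr Q hQ Q' hQ'𝒢
      _ ≤ (Real.exp 1 * ApQ p w Q) ^ t *
            ((1 - 2 ^ (θ - 1))⁻¹ * (avg Q f ^ θ * volume.real Q)) := by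
          rw [← Finset.mul_sum]
          gcongr
          exact h.sum_avg_rpow_le hfpos hfint hfavg h0 h1 Q hQ
      _ = K * (|avg Q w| * ν.real Q) := by
          rw [hterm Q hQ, Real.mul_rpow (Real.exp_pos _).le hA.le, hK]; ring

theorem exists_lintegral_finite_le {p : ℝ} (hp : 1 < p) (n : ℕ) :
    ∃ C : ℝ, 0 ≤ C ∧ ∀ (w : (Fin n → ℝ) → ℝ) (𝒢 : Finset (Set (Fin n → ℝ))) (W M : ℝ)
      (R : Set (Fin n → ℝ)), (∀ x, 0 < w x) → IsSparseLaminar p w 𝒢 → IntegrableOn w R →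
      (∀ Q ∈ 𝒢, Q ⊆ R) → 1 ≤ W → (∀ Q ∈ 𝒢, ApQ p w Q ≤ W) →
      (∀ Q ∈ 𝒢, ApQ p w Q ^ (1 / p) * AexpQ w Q ^ ((p - 1) / p) ≤ M) → 0 ≤ M →
      ∫⁻ x, ENNReal.ofReal ((∑ Q ∈ 𝒢, Q.indicator (fun _ => |avg Q w|) x) ^ (p / (p - 1)))
        ∂(volume.withDensity fun x => ENNReal.ofReal (w x ^ (-(1 / (p - 1))))) ≤
      ENNReal.ofReal (C * (1 + Real.log W) ^ (p / (p - 1) - 1) * M ^ (p / (p - 1)) *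
        ∫ x in R, w x) := by
  obtain ⟨C, hC, hfrozen⟩ := exists_lintegral_frozen_le hp n
  refine ⟨4 * C, by positivity, fun w 𝒢 W M R hw h hR hsub hW hAW hAM hM => ?_⟩
  set q := p / (p - 1) with hqdef
  have hq : 1 < q := by rw [hqdef, lt_div_iff₀ (by linarith)]; linarith
  set ν := volume.withDensity fun x => ENNReal.ofReal (w x ^ (-(1 / (p - 1)))) with hν
  set S : Set (Fin n → ℝ) → ℝ := fun Q =>
    avg Q w ^ q * ((avg Q fun x => w x ^ (-(1 / (p - 1)))) * volume.real Q) with hS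
  have hS0 : ∀ Q ∈ 𝒢, 0 ≤ S Q := fun Q hQ => by
    have hQa := h.admissible Q hQ
    have h1 := hQa.avg_pos hw
    have h2 := hQa.avg_dual_pos hw
    positivity
  set lev : Set (Fin n → ℝ) → ℕ := fun Q => ⌊Real.log (ApQ p w Q)⌋₊ with hlev
  set N := ⌊Real.log W⌋₊ + 1 with hN
  have hlog0 : ∀ Q ∈ 𝒢, 0 ≤ Real.log (ApQ p w Q) := fun Q hQ => by
    have hQa := h.admissible Q hQ
    exact Real.log_nonneg ((hQa.one_le_AexpQ hw).trans (hQa.AexpQ_le_ApQ hp hw))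
  have hmaps : ∀ Q ∈ 𝒢, lev Q ∈ Finset.range N := fun Q hQ => by
    rw [Finset.mem_range, hN, Nat.lt_succ_iff]
    exact Nat.floor_le_floor (Real.log_le_log ((h.admissible Q hQ).ApQ_pos hw) (hAW Q hQ))
  have hNle : (N : ℝ) ≤ 1 + Real.log W := by
    rw [hN, Nat.cast_add_one]
    linarith [Nat.floor_le (Real.log_nonneg hW)]
  set T : ℕ → (Fin n → ℝ) → ℝ := fun a x =>
    ∑ Q ∈ 𝒢 with lev Q = a, Q.indicator (fun _ => |avg Q w|) x with hT
  have hT0 : ∀ a x, 0 ≤ T a x := fun a x => Finset.sum_nonneg fun Q _ =>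
    indicator_nonneg (fun _ _ => abs_nonneg _) x
  have hTm : ∀ a, Measurable (T a) := fun a => Finset.measurable_fun_sum _ fun Q hQ =>
    measurable_const.indicator (h.admissible Q (Finset.mem_filter.1 hQ).1).measurableSet
  have hlevel : ∀ a, ∫⁻ x, ENNReal.ofReal (T a x ^ q) ∂ν ≤
      ENNReal.ofReal (C * ∑ Q ∈ 𝒢 with lev Q = a, S Q) := fun a => by
    refine hfrozen w _ hw (h.mono (Finset.filter_subset _ _)) fun Q hQ Q' hQ' => ?_
    rw [Finset.mem_filter] at hQ hQ'
    have hA := (h.admissible Q hQ.1).ApQ_pos hw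
    have hA' := (h.admissible Q' hQ'.1).ApQ_pos hw
    rw [← Real.log_le_log_iff hA' (by positivity), Real.log_mul (Real.exp_ne_zero _) hA.ne',
      Real.log_exp]
    have u1 := Nat.lt_floor_add_one (Real.log (ApQ p w Q'))
    have u2 := Nat.floor_le (hlog0 Q hQ.1)
    have u3 : ⌊Real.log (ApQ p w Q')⌋₊ = ⌊Real.log (ApQ p w Q)⌋₊ := hQ'.2.trans hQ.2.symm
    rw [u3] at u1
    linarith
  have hSsum : ∑ Q ∈ 𝒢, S Q ≤ M ^ q * (4 * ∫ x in R, w x) := by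
    calc ∑ Q ∈ 𝒢, S Q
        ≤ ∑ Q ∈ 𝒢, M ^ q *
            (Real.exp (avg Q fun x => Real.log (w x)) * volume.real Q) := by
          refine Finset.sum_le_sum fun Q hQ => ?_
          have hQa := h.admissible Q hQ
          have hA := hQa.ApQ_pos hw
          have hE : 0 ≤ AexpQ w Q := zero_le_one.trans (hQa.one_le_AexpQ hw)
          have := hAM Q hQ
          simp only [hS]
          rw [← mul_assoc, hQa.avg_rpow_mul_avg_dual hp hw, ← mul_assoc]
          gcongr
      _ ≤ _ := by
          rw [← Finset.mul_sum]
          gcongr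
          exact h.sum_exp_avg_log_le hw hR hsub
  calc ∫⁻ x, ENNReal.ofReal ((∑ Q ∈ 𝒢, Q.indicator (fun _ => |avg Q w|) x) ^ q) ∂ν
      ≤ ∫⁻ x, ENNReal.ofReal ((N : ℝ) ^ (q - 1)) *
          ∑ a ∈ Finset.range N, ENNReal.ofReal (T a x ^ q) ∂ν := by
        refine lintegral_mono fun x => ?_
        have hTq : ∀ a ∈ Finset.range N, 0 ≤ T a x ^ q := fun a _ =>
          Real.rpow_nonneg (hT0 a x) _
        rw [← ENNReal.ofReal_sum_of_nonneg hTq, ← ENNReal.ofReal_mul (by positivity),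
          ← Finset.sum_fiberwise_of_maps_to hmaps]
        refine ENNReal.ofReal_le_ofReal ?_
        have := Real.rpow_sum_le_const_mul_sum_rpow_of_nonneg (Finset.range N) hq.le
          fun a _ => hT0 a x
        rwa [Finset.card_range] at this
    _ = ENNReal.ofReal ((N : ℝ) ^ (q - 1)) *
          ∑ a ∈ Finset.range N, ∫⁻ x, ENNReal.ofReal (T a x ^ q) ∂ν := by
        have hm : ∀ a ∈ Finset.range N, Measurable fun x => ENNReal.ofReal (T a x ^ q) :=
          fun a _ => ((hTm a).pow_const q).ennreal_ofReal
        rw [lintegral_const_mul _ (Finset.measurable_fun_sum _ hm), lintegral_finsetSum _ hm]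
    _ ≤ ENNReal.ofReal ((N : ℝ) ^ (q - 1)) *
          ∑ a ∈ Finset.range N, ENNReal.ofReal (C * ∑ Q ∈ 𝒢 with lev Q = a, S Q) := by
        gcongr with a; exact hlevel a
    _ = ENNReal.ofReal ((N : ℝ) ^ (q - 1) * (C * ∑ Q ∈ 𝒢, S Q)) := by
        rw [← ENNReal.ofReal_sum_of_nonneg fun a _ => mul_nonneg hC
          (Finset.sum_nonneg fun Q hQ => hS0 Q (Finset.mem_filter.1 hQ).1),
          ← ENNReal.ofReal_mul (by positivity), ← Finset.mul_sum,
          Finset.sum_fiberwise_of_maps_to hmaps]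
    _ ≤ _ := by
        refine ENNReal.ofReal_le_ofReal ?_
        have hw0 : 0 ≤ ∫ x in R, w x := integral_nonneg fun x => (hw x).le
        have hq1 : 0 ≤ q - 1 := by linarith
        calc (N : ℝ) ^ (q - 1) * (C * ∑ Q ∈ 𝒢, S Q)
            ≤ (1 + Real.log W) ^ (q - 1) * (C * (M ^ q * (4 * ∫ x in R, w x))) := by
              have := Finset.sum_nonneg hS0
              have := Real.log_nonneg hW
              gcongr
          _ = _ := by ring

end FiniteTesting

section Cubes

theorem IsCube.isAdmissible {p : ℝ} {w : (Fin n → ℝ) → ℝ} {Q : Set (Fin n → ℝ)} (hQ : IsCube Q)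
    (hw : LocallyIntegrable w volume)
    (hdual : LocallyIntegrable (fun x => w x ^ (-(1 / (p - 1)))) volume)
    (hlog : LocallyIntegrable (fun x => Real.log (w x)) volume) : IsAdmissible p w Q := by
  obtain ⟨a, l, hl, rfl⟩ := hQ
  have hc : IsCompact (Icc a (a + fun _ => l)) := isCompact_Icc
  refine ⟨measurableSet_Icc, ?_, hc.measure_ne_top, hw.integrableOn_isCompact hc,
    hdual.integrableOn_isCompact hc, hlog.integrableOn_isCompact hc⟩
  rw [measureReal_def, Real.volume_Icc_pi_toReal fun i => by simp [hl.le]]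
  exact Finset.prod_pos fun i _ => by simpa using hl

theorem IsDyadicCubeOf.exists_isCube {k : ℤ} {Q : Set (Fin n → ℝ)} (hQ : IsDyadicCubeOf k Q) :
    ∃ Q', IsCube Q' ∧ Q =ᵐ[volume] Q' := by
  obtain ⟨a, rfl⟩ := hQ
  exact ⟨_, ⟨a, (2 : ℝ) ^ k, by positivity, rfl⟩, Measure.univ_pi_Ico_ae_eq_Icc⟩

theorem IsDyadicCubeOf.measurableSet {k : ℤ} {Q : Set (Fin n → ℝ)} (hQ : IsDyadicCubeOf k Q) :
    MeasurableSet Q := by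
  obtain ⟨a, rfl⟩ := hQ
  exact MeasurableSet.univ_pi fun _ => measurableSet_Ico

theorem IsDyadicCubeOf.interior_nonempty {k : ℤ} {Q : Set (Fin n → ℝ)}
    (hQ : IsDyadicCubeOf k Q) : (interior Q).Nonempty := by
  obtain ⟨a, rfl⟩ := hQ
  rw [interior_pi_set finite_univ]
  simp only [interior_Ico]
  exact univ_pi_nonempty_iff.2 fun i => nonempty_Ioo.2 (lt_add_of_pos_right _ (by positivity))

theorem IsAdmissible.congr_set {p : ℝ} {w : (Fin n → ℝ) → ℝ} {Q Q' : Set (Fin n → ℝ)}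
    (h : IsAdmissible p w Q') (hQ : MeasurableSet Q) (hQQ' : Q =ᵐ[volume] Q') :
    IsAdmissible p w Q where
  measurableSet := hQ
  pos := (measureReal_congr hQQ').symm ▸ h.pos
  ne_top := (measure_congr hQQ').symm ▸ h.ne_top
  integrableOn := h.integrableOn.congr_set_ae hQQ'
  integrableOn_dual := h.integrableOn_dual.congr_set_ae hQQ'
  integrableOn_log := h.integrableOn_log.congr_set_ae hQQ'

theorem IsDyadicGrid.countable {𝒟 : Set (Set (Fin n → ℝ))} (h : IsDyadicGrid 𝒟) :
    𝒟.Countable := by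
  have hsub : 𝒟 ⊆ ⋃ k : ℤ, {Q | Q ∈ 𝒟 ∧ IsDyadicCubeOf k Q} := fun Q hQ => by
    obtain ⟨k, hk⟩ := h.1 Q hQ
    exact mem_iUnion.2 ⟨k, hQ, hk⟩
  exact (countable_iUnion fun k => (h.2.2 k).2.countable_of_nonempty_interior
    fun Q hQ => hQ.2.interior_nonempty).mono hsub

theorem IsDyadicGrid.isSparseLaminar {𝒟 𝒮 : Set (Set (Fin n → ℝ))} (h : IsDyadicGrid 𝒟)
    (hsub : 𝒮 ⊆ 𝒟) (hsparse : IsSparse 𝒮) {p : ℝ} {w : (Fin n → ℝ) → ℝ}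
    (hadm : ∀ Q ∈ 𝒟, IsAdmissible p w Q) {𝒢 : Finset (Set (Fin n → ℝ))}
    (h𝒢 : ∀ Q ∈ 𝒢, Q ∈ 𝒮) : IsSparseLaminar p w 𝒢 where
  admissible Q hQ := hadm Q (hsub (h𝒢 Q hQ))
  laminar Q hQ P hP := h.2.1 Q (hsub (h𝒢 Q hQ)) P (hsub (h𝒢 P hP))
  packing Q hQ 𝒞 h𝒞 hd hs := by
    have ha : ∀ P ∈ 𝒞, IsAdmissible p w P := fun P hP => hadm P (hsub (h𝒢 P (h𝒞 hP)))
    have hQa := hadm Q (hsub (h𝒢 Q hQ))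
    have hsum : ∑ P ∈ 𝒞, volume.real P = volume.real (⋃ P ∈ 𝒞, P) :=
      (measureReal_biUnion_finset hd (fun P hP => (ha P hP).measurableSet)
        fun P hP => (ha P hP).ne_top).symm
    have hle : volume (⋃ P ∈ 𝒞, P) ≤ volume Q / 2 :=
      (measure_mono (iUnion₂_subset fun P hP => subset_biUnion_of_mem
        (u := fun Q' : Set (Fin n → ℝ) => Q')
        (show P ∈ {Q' | Q' ∈ 𝒮 ∧ Q' ⊂ Q} from ⟨h𝒢 P (h𝒞 hP), hs P hP⟩))).trans
        (hsparse Q (h𝒢 Q hQ))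
    rw [hsum, measureReal_def, measureReal_def]
    have := ENNReal.toReal_mono (ENNReal.div_ne_top hQa.ne_top two_ne_zero) hle
    rwa [ENNReal.toReal_div, ENNReal.toReal_ofNat] at this

end Cubes

/-- A bound for all finite subfamilies passes to the whole sparse operator. -/
theorem lintegral_sparseT_rpow_le {𝒮 : Set (Set (Fin n → ℝ))} (hc : 𝒮.Countable)
    (hmeas : ∀ Q ∈ 𝒮, MeasurableSet Q) {w : (Fin n → ℝ) → ℝ} (hw : ∀ Q ∈ 𝒮, 0 ≤ avg Q w)
    {q : ℝ} (hq : 0 < q) {ν : Measure (Fin n → ℝ)} {b : ℝ≥0∞}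
    (hb : ∀ 𝒢 : Finset (Set (Fin n → ℝ)), (∀ Q ∈ 𝒢, Q ∈ 𝒮) →
      ∫⁻ x, ENNReal.ofReal ((∑ Q ∈ 𝒢, Q.indicator (fun _ => |avg Q w|) x) ^ q) ∂ν ≤ b) :
    ∫⁻ x, sparseT 𝒮 w x ^ q ∂ν ≤ b := by
  have : Countable 𝒮 := hc
  set f : Finset 𝒮 → (Fin n → ℝ) → ℝ≥0∞ := fun s x =>
    (∑ Q ∈ s, Q.1.indicator (fun _ => ENNReal.ofReal (avg Q.1 w)) x) ^ q with hf
  have hfm : ∀ s, Measurable (f s) := fun s =>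
    (Finset.measurable_fun_sum _ fun Q _ =>
      measurable_const.indicator (hmeas Q.1 Q.2)).pow_const q
  have hmono : Monotone f := fun s t hst x =>
    ENNReal.rpow_le_rpow (Finset.sum_le_sum_of_subset hst) hq.le
  have hsup : ∀ x, sparseT 𝒮 w x ^ q = ⨆ s, f s x := fun x => by
    rw [sparseT, ENNReal.tsum_eq_iSup_sum]
    exact (ENNReal.orderIsoRpow q hq).map_iSup _
  simp only [hsup]
  rw [lintegral_iSup_directed (fun s => (hfm s).aemeasurable) hmono.directed_le]
  refine iSup_le fun s => ?_
  refine le_of_eq_of_le (lintegral_congr fun x => ?_)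
    (hb (s.map (Function.Embedding.subtype _)) fun Q hQ => ?_)
  · rw [Finset.sum_map, ← ENNReal.ofReal_rpow_of_nonneg (Finset.sum_nonneg fun Q _ =>
      indicator_nonneg (fun _ _ => abs_nonneg _) x) hq.le, ENNReal.ofReal_sum_of_nonneg
      fun Q _ => indicator_nonneg (fun _ _ => abs_nonneg _) x]
    simp only [hf]
    congr 1
    refine Finset.sum_congr rfl fun Q _ => ?_
    by_cases hx : x ∈ Q.1 <;> simp [hx, abs_of_nonneg (hw Q.1 Q.2)]
  · obtain ⟨P, _, rfl⟩ := Finset.mem_map.1 hQ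
    exact P.2

end Weights

/-- Theorem (testing bound with logarithmic factor, exponential mixed constant):
for `w ∈ A_p`, `σ = w^{1-p'}`, and a sparse family `𝒮` of dyadic cubes,
`(∫_R (∑_{Q ∈ 𝒮, Q ⊆ R} (⨍_Q w) χ_Q)^{p'} σ)^{1/p'}
  ≲ (1 + log [w]_{A_p})^{1/p} [w]_{(A_p)^{1/p}(A_∞^exp)^{1/p'}} w(R)^{1/p'}`. -/
theorem stmt12 (p : ℝ) (hp : 1 < p) (n : ℕ) :
    ∃ C > (0 : ℝ), ∀ (𝒟 𝒮 : Set (Set (Fin n → ℝ))),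
      IsDyadicGrid 𝒟 → 𝒮 ⊆ 𝒟 → IsSparse 𝒮 →
      ∀ (w σ : (Fin n → ℝ) → ℝ), (∀ x, 0 < w x) →
      σ = (fun x => w x ^ (-(1 / (p - 1)))) →
      LocallyIntegrable w volume → LocallyIntegrable σ volume →
      LocallyIntegrable (fun x => Real.log (w x)) volume →
      BddAbove (Set.range fun Q : {Q : Set (Fin n → ℝ) // IsCube Q} => ApQ p w Q.1) →
      ∀ R : Set (Fin n → ℝ), IsCube R →
      (∫⁻ x in R, sparseT {Q | Q ∈ 𝒮 ∧ Q ⊆ R} w x ^ (p / (p - 1)) *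
          ENNReal.ofReal (σ x)) ^ ((p - 1) / p) ≤
        ENNReal.ofReal (C *
          (1 + Real.log (⨆ Q : {Q : Set (Fin n → ℝ) // IsCube Q}, ApQ p w Q.1)) ^ (1 / p) *
          (⨆ Q : {Q : Set (Fin n → ℝ) // IsCube Q},
            ApQ p w Q.1 ^ (1 / p) * AexpQ w Q.1 ^ ((p - 1) / p)) *
          (∫ x in R, w x) ^ ((p - 1) / p)) := by
  obtain ⟨C₀, hC₀, hfinite⟩ := exists_lintegral_finite_le hp n
  have hp' : 0 < p - 1 := by linarith
  have hp0 : 0 < p := by linarith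
  refine ⟨(C₀ + 1) ^ ((p - 1) / p), by positivity, ?_⟩
  rintro 𝒟 𝒮 h𝒟 h𝒮 hsparse w σ hw rfl hwi hσi hli hbdd R hR
  set W := ⨆ Q : {Q : Set (Fin n → ℝ) // IsCube Q}, ApQ p w Q.1 with hW
  set M := ⨆ Q : {Q : Set (Fin n → ℝ) // IsCube Q},
    ApQ p w Q.1 ^ (1 / p) * AexpQ w Q.1 ^ ((p - 1) / p) with hM
  have hcube : ∀ Q : {Q : Set (Fin n → ℝ) // IsCube Q}, IsAdmissible p w Q.1 := fun Q =>
    Q.2.isAdmissible hwi hσi hli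
  have hAW : ∀ Q : {Q : Set (Fin n → ℝ) // IsCube Q}, ApQ p w Q.1 ≤ W := le_ciSup hbdd
  have hAM : ∀ Q : {Q : Set (Fin n → ℝ) // IsCube Q},
      ApQ p w Q.1 ^ (1 / p) * AexpQ w Q.1 ^ ((p - 1) / p) ≤ M := by
    refine le_ciSup ⟨W, ?_⟩
    rintro _ ⟨Q, rfl⟩
    exact ((hcube Q).mixed_le_ApQ hp hw).trans (hAW Q)
  have hRa := hcube ⟨R, hR⟩
  have hW1 : 1 ≤ W :=
    ((hRa.one_le_AexpQ hw).trans (hRa.AexpQ_le_ApQ hp hw)).trans (hAW ⟨R, hR⟩)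
  have hM0 : 0 ≤ M := by
    refine le_trans ?_ (hAM ⟨R, hR⟩)
    have h1 := hRa.ApQ_pos hw
    have h2 : 0 ≤ AexpQ w R := zero_le_one.trans (hRa.one_le_AexpQ hw)
    positivity
  have hdyadic : ∀ Q ∈ 𝒟, IsAdmissible p w Q ∧ ApQ p w Q ≤ W ∧
      ApQ p w Q ^ (1 / p) * AexpQ w Q ^ ((p - 1) / p) ≤ M := fun Q hQ => by
    obtain ⟨k, hk⟩ := h𝒟.1 Q hQ
    obtain ⟨Q', hQ', hQQ'⟩ := hk.exists_isCube
    refine ⟨(hcube ⟨Q', hQ'⟩).congr_set hk.measurableSet hQQ', ?_⟩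
    simp only [ApQ, AexpQ, avg_congr_set hQQ']
    exact ⟨hAW ⟨Q', hQ'⟩, hAM ⟨Q', hQ'⟩⟩
  set ν := volume.withDensity fun x => ENNReal.ofReal (w x ^ (-(1 / (p - 1)))) with hν
  set I := ∫ x in R, w x with hI
  have hI0 : 0 ≤ I := integral_nonneg fun x => (hw x).le
  have hL0 : 0 ≤ 1 + Real.log W := by linarith [Real.log_nonneg hW1]
  have hmeas : ∀ Q ∈ {Q | Q ∈ 𝒮 ∧ Q ⊆ R}, MeasurableSet Q := fun Q hQ =>
    (hdyadic Q (h𝒮 hQ.1)).1.measurableSet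
  have hcount : {Q | Q ∈ 𝒮 ∧ Q ⊆ R}.Countable := h𝒟.countable.mono fun Q hQ => h𝒮 hQ.1
  have key : ∫⁻ x, sparseT {Q | Q ∈ 𝒮 ∧ Q ⊆ R} w x ^ (p / (p - 1)) ∂ν ≤
      ENNReal.ofReal (C₀ * (1 + Real.log W) ^ (p / (p - 1) - 1) * M ^ (p / (p - 1)) * I) :=
    lintegral_sparseT_rpow_le hcount hmeas
      (fun Q hQ => ((hdyadic Q (h𝒮 hQ.1)).1.avg_pos hw).le) (by positivity) fun 𝒢 h𝒢 =>
      hfinite w 𝒢 W M R hw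
        (h𝒟.isSparseLaminar h𝒮 hsparse (fun Q hQ => (hdyadic Q hQ).1) fun Q hQ => (h𝒢 Q hQ).1)
        hRa.integrableOn (fun Q hQ => (h𝒢 Q hQ).2) hW1
        (fun Q hQ => (hdyadic Q (h𝒮 (h𝒢 Q hQ).1)).2.1)
        (fun Q hQ => (hdyadic Q (h𝒮 (h𝒢 Q hQ).1)).2.2) hM0
  have hTm : Measurable fun x => sparseT {Q | Q ∈ 𝒮 ∧ Q ⊆ R} w x ^ (p / (p - 1)) := by
    have : Countable {Q | Q ∈ 𝒮 ∧ Q ⊆ R} := hcount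
    unfold sparseT
    refine Measurable.pow_const (Measurable.tsum fun Q => ?_) _
    exact measurable_const.indicator (hmeas Q.1 Q.2)
  have hle : ∫⁻ x in R, sparseT {Q | Q ∈ 𝒮 ∧ Q ⊆ R} w x ^ (p / (p - 1)) *
      ENNReal.ofReal (w x ^ (-(1 / (p - 1)))) ≤
      ∫⁻ x, sparseT {Q | Q ∈ 𝒮 ∧ Q ⊆ R} w x ^ (p / (p - 1)) ∂ν := by
    rw [hν, lintegral_withDensity_eq_lintegral_mul₀
      hσi.aestronglyMeasurable.aemeasurable.ennreal_ofReal hTm.aemeasurable]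
    refine (setLIntegral_le_lintegral _ _).trans (le_of_eq (lintegral_congr fun x => ?_))
    rw [Pi.mul_apply, mul_comm]
  have hr : 0 ≤ (p - 1) / p := by positivity
  refine (ENNReal.rpow_le_rpow (hle.trans key) hr).trans ?_
  rw [ENNReal.ofReal_rpow_of_nonneg (by positivity) hr]
  refine ENNReal.ofReal_le_ofReal ?_
  rw [Real.mul_rpow (by positivity) hI0, Real.mul_rpow (by positivity) (by positivity),
    Real.mul_rpow hC₀ (by positivity), ← Real.rpow_mul hL0, ← Real.rpow_mul hM0,
    show p / (p - 1) * ((p - 1) / p) = 1 by field_simp, Real.rpow_one,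
    show (p / (p - 1) - 1) * ((p - 1) / p) = 1 / p by field_simp; ring]
  gcongr
  linarith
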